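/- arXiv:1604.02845 — 2 statements merged into one kernel-verified Lean document; each statement's English description precedes it below -/
import Mathlib

section
/- Let $R$ be a commutative ring, let $h \in R$, let $n$ be a natural number, and let $(c_k)_{k=0}^{n}$ and $(M_k)_{k=0}^{n}$ be families of elements of $R$. If for every $k$ with $0 \le k \le n$ one has $M_k = \sum_{i=0}^{k} (-1)^{i} \binom{n-i+1}{n-k+1} h^{k-i} c_i$, then for every $k$ with $0 \le k \le n$ one has $c_k = \sum_{i=0}^{k} (-1)^{i} \binom{n-i+1}{n-k+1} h^{k-i} M_i$. -/
/-!
Encode a sequence `c` by the binary form `F(x, y) = ∑ i ≤ N, c i * x ^ i * y ^ (N - i)` with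
`N = n + 1`. The formula of the theorem reads off the coefficients of `F(-x, y + h * x)`, and the
linear substitution `(x, y) ↦ (-x, y + h * x)` is an involution. On coefficients, this amounts to
`(N - j).choose m * (N - j - m).choose l = (N - j).choose (m + l) * (m + l).choose m` together with
the vanishing of the alternating sum of the binomial coefficients `(m + l).choose m`.
-/

open Finset

theorem sum_antidiagonal_assoc {ι A : Type*} [AddMonoid ι] [HasAntidiagonal ι] [AddCommMonoid A]
    (f : ι → ι → ι → A) (k : ι) :
    ∑ p ∈ antidiagonal k, ∑ q ∈ antidiagonal p.1, f q.1 q.2 p.2 =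
      ∑ p ∈ antidiagonal k, ∑ q ∈ antidiagonal p.2, f p.1 q.1 q.2 := by
  simp only [sum_sigma']
  apply sum_nbij' (fun ⟨⟨_, l⟩, ⟨j, m⟩⟩ ↦ ⟨(j, m + l), (m, l)⟩)
    (fun ⟨⟨j, _⟩, ⟨m, l⟩⟩ ↦ ⟨(j + m, l), (j, m)⟩) <;>
    grind [add_assoc, HasAntidiagonal.mem_antidiagonal]

theorem choose_mul_choose_sub (a m l : ℕ) :
    a.choose m * (a - m).choose l = a.choose (m + l) * (m + l).choose m := by
  simpa using (Nat.choose_mul (n := a) (Nat.le_add_right m l)).symm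

theorem sum_antidiagonal_neg_one_pow_mul_choose_mul_choose_sub (a d : ℕ) :
    ∑ q ∈ antidiagonal d, (-1 : ℤ) ^ q.1 * (a.choose q.1 * (a - q.1).choose q.2) =
      if d = 0 then 1 else 0 := by
  calc
    _ = ∑ q ∈ antidiagonal d, (-1 : ℤ) ^ q.1 * (a.choose d * d.choose q.1) := by
      refine sum_congr rfl fun q hq ↦ ?_
      rw [← mem_antidiagonal.mp hq]
      congr 1
      exact_mod_cast choose_mul_choose_sub a q.1 q.2
    _ = a.choose d * if d = 0 then 1 else 0 := by
      simp_rw [mul_left_comm _ (a.choose d : ℤ)]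
      rw [← mul_sum, Nat.sum_antidiagonal_eq_sum_range_succ_mk, Int.alternating_sum_range_choose]
    _ = if d = 0 then 1 else 0 := by
      split_ifs with hd <;> simp [hd]

section PolarTransform

variable {S A : Type*} [Monoid S] [AddCommGroup A] [DistribMulAction S A]

/-- The transformation relating Chern–Mather classes and polar classes, with `S` acting on `A` as
powers of the hyperplane class `h` act on the Chow group by cap product; the paper's case is
`N = n + 1`. Its coefficient `(n - i + 1).choose (n - k + 1)` is written here in the symmetric form
`(N - i).choose (k - i)`, which makes the transformation an involution in every degree `k`, even
where `N - i` is truncated. -/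
def polarTransform (h : S) (N : ℕ) (c : ℕ → A) (k : ℕ) : A :=
  ∑ p ∈ antidiagonal k, ((-1 : ℤ) ^ p.1 * (N - p.1).choose p.2) • h ^ p.2 • c p.1

theorem polarTransform_congr (h : S) (N : ℕ) {c c' : ℕ → A} {k : ℕ} (hc : ∀ i ≤ k, c i = c' i) :
    polarTransform h N c k = polarTransform h N c' k :=
  sum_congr rfl fun p hp ↦ by rw [hc p.1 (Nat.le.intro (mem_antidiagonal.mp hp))]

theorem polarTransform_succ_eq_sum_range (h : S) (c : ℕ → A) {n k : ℕ} (hk : k ≤ n) :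
    polarTransform h (n + 1) c k =
      ∑ i ∈ range (k + 1),
        ((-1 : ℤ) ^ i * (n - i + 1).choose (n - k + 1)) • h ^ (k - i) • c i := by
  rw [polarTransform, Nat.sum_antidiagonal_eq_sum_range_succ_mk]
  refine sum_congr rfl fun i hi ↦ ?_
  have hik : i ≤ k := mem_range_succ_iff.mp hi
  have choose_eq : (n + 1 - i).choose (k - i) = (n - i + 1).choose (n - k + 1) := by
    rw [Nat.sub_add_comm (hik.trans hk)]
    exact Nat.choose_symm_of_eq_add (by lia)
  rw [choose_eq]

theorem polarTransform_polarTransform_eq_sum_sum (h : S) (N : ℕ) (c : ℕ → A) (k : ℕ) :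
    polarTransform h N (polarTransform h N c) k =
      ∑ p ∈ antidiagonal k, ∑ q ∈ antidiagonal p.2,
        ((-1 : ℤ) ^ q.1 * ((N - p.1).choose q.1 * (N - p.1 - q.1).choose q.2)) •
          h ^ (q.1 + q.2) • c p.1 := by
  have term_eq (j m l : ℕ) :
      ((-1 : ℤ) ^ (j + m) * (N - (j + m)).choose l) • h ^ l •
          ((-1 : ℤ) ^ j * (N - j).choose m) • h ^ m • c j =
        ((-1 : ℤ) ^ m * ((N - j).choose m * (N - j - m).choose l)) • h ^ (m + l) • c j := by
    have sign_eq : (-1 : ℤ) ^ (j + m) * (-1) ^ j = (-1) ^ m := by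
      rw [pow_add, mul_right_comm, ← mul_pow]
      simp
    rw [smul_comm (h ^ l), smul_smul, smul_smul, ← pow_add, add_comm l m, ← Nat.sub_sub, ← sign_eq]
    congr 1
    ring
  rw [← sum_antidiagonal_assoc (fun j m l ↦ ((-1 : ℤ) ^ m *
    ((N - j).choose m * (N - j - m).choose l)) • h ^ (m + l) • c j)]
  refine sum_congr rfl fun p _ ↦ ?_
  rw [polarTransform, smul_sum, smul_sum]
  exact sum_congr rfl fun q hq ↦ by rw [← mem_antidiagonal.mp hq, term_eq]

theorem polarTransform_involutive (h : S) (N : ℕ) :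
    Function.Involutive (polarTransform h N : (ℕ → A) → ℕ → A) := by
  intro c
  funext k
  calc
    polarTransform h N (polarTransform h N c) k
    _ = ∑ p ∈ antidiagonal k, (if p.2 = 0 then 1 else 0 : ℤ) • h ^ p.2 • c p.1 := by
      rw [polarTransform_polarTransform_eq_sum_sum]
      refine sum_congr rfl fun p _ ↦ ?_
      rw [← sum_antidiagonal_neg_one_pow_mul_choose_mul_choose_sub (N - p.1), sum_smul]
      exact sum_congr rfl fun q hq ↦ by rw [mem_antidiagonal.mp hq]
    _ = c k := by
      rw [sum_eq_single_of_mem (k, 0) (by simp)]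
      · simp
      · intro p hp p_ne
        have snd_ne_zero : p.2 ≠ 0 := fun h0 ↦
          p_ne ((HasAntidiagonal.antidiagonal_congr' hp (by simp)).mpr h0)
        simp [snd_ne_zero]

theorem polar_chernMather_reciprocity_general (h : S) (n : ℕ) (c M : ℕ → A)
    (hM : ∀ k ≤ n, M k = ∑ i ∈ range (k + 1),
      ((-1 : ℤ) ^ i * (n - i + 1).choose (n - k + 1)) • h ^ (k - i) • c i) :
    ∀ k ≤ n, c k = ∑ i ∈ range (k + 1),
      ((-1 : ℤ) ^ i * (n - i + 1).choose (n - k + 1)) • h ^ (k - i) • M i := by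
  intro k hk
  have M_eq (i : ℕ) (hi : i ≤ k) : polarTransform h (n + 1) c i = M i := by
    rw [hM i (hi.trans hk), polarTransform_succ_eq_sum_range h c (hi.trans hk)]
  calc
    c k = polarTransform h (n + 1) (polarTransform h (n + 1) c) k := by
      rw [polarTransform_involutive h (n + 1) c]
    _ = polarTransform h (n + 1) M k := polarTransform_congr h (n + 1) M_eq
    _ = _ := polarTransform_succ_eq_sum_range h M hk

end PolarTransform

/-- Reciprocity: if `M_k = ∑_{i=0}^{k} (-1)^i C(n-i+1, n-k+1) h^{k-i} c_i` for all
`k ≤ n`, then `c_k = ∑_{i=0}^{k} (-1)^i C(n-i+1, n-k+1) h^{k-i} M_i` for all `k ≤ n`. -/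
theorem polar_chernMather_reciprocity {R : Type*} [CommRing R] (h : R) (n : ℕ)
    (c M : ℕ → R)
    (hM : ∀ k, k ≤ n →
      M k = ∑ i ∈ Finset.range (k + 1),
        (-1 : R) ^ i * (Nat.choose (n - i + 1) (n - k + 1) : R) * h ^ (k - i) * c i) :
    ∀ k, k ≤ n →
      c k = ∑ i ∈ Finset.range (k + 1),
        (-1 : R) ^ i * (Nat.choose (n - i + 1) (n - k + 1) : R) * h ^ (k - i) * M i := by
  simpa [zsmul_eq_mul, mul_assoc] using
    polar_chernMather_reciprocity_general h n c M (by simpa [zsmul_eq_mul, mul_assoc] using hM)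
end

section
/- Let $R$ be a commutative ring, let $h \in R$, let $n$ be a natural number, and let $(c_k)_{k=0}^{n}$ be a family of elements of $R$. Define $M_k := \sum_{i=0}^{k} (-1)^{i} \binom{n-i+1}{n-k+1} h^{k-i} c_i$ for $0 \le k \le n$, and then define $c'_k := \sum_{i=0}^{k} (-1)^{i} \binom{n-i+1}{n-k+1} h^{k-i} M_i$ for $0 \le k \le n$. Then $c'_k = c_k$ for all $0 \le k \le n$; that is, the linear transformation on finite sequences in $R$ with kernel $(-1)^i \binom{n-i+1}{n-k+1} h^{k-i}$ is an involution. -/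
/-!
In the kernel, `C(N-i, N-k) h^(k-i)` is the coefficient of `x^(N-k)` in `(x+h)^(N-i)`. Encoding a
sequence as `P(x) = ∑ c_i x^(N-i)`, the transformation is therefore `P(x) ↦ (-1)^N P(-x-h)`, and
`x ↦ -x-h` is an involution of the affine line. In terms of kernels, the `(k, j)` entry of
the square is a multiple of the alternating sum `∑ (-1)^m C(k-j, m) = (1-1)^(k-j)`, which vanishes
for `j < k`.
-/

open Finset

/-- The kernel of the transformation exchanging polar classes and Chern–Mather classes of an
`n`-dimensional variety with hyperplane class `h`. The paper's binomial coefficient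
`C(n-i+1, n-k+1)` is the case `N = n + 1`; subtraction is truncated, so the kernel is meaningful
only for `i ≤ k ≤ N`. -/
def polarKernel {R : Type*} [CommRing R] (h : R) (N k i : ℕ) : R :=
  (-1) ^ i * ((N - i).choose (N - k) : R) * h ^ (k - i)

theorem sum_range_neg_one_pow_mul_choose {R : Type*} [Ring R] (n : ℕ) :
    ∑ m ∈ range (n + 1), (-1 : R) ^ m * (n.choose m : R) = if n = 0 then 1 else 0 := by
  exact_mod_cast congrArg (Int.cast : ℤ → R) (Int.alternating_sum_range_choose (n := n))

theorem sum_range_smul_sum_range_smul {R A : Type*} [Semiring R] [AddCommMonoid A] [Module R A]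
    (K L : ℕ → ℕ → R) (c : ℕ → A) (k : ℕ) :
    ∑ i ∈ range (k + 1), K k i • ∑ j ∈ range (i + 1), L i j • c j =
      ∑ j ∈ range (k + 1), (∑ i ∈ Ico j (k + 1), K k i * L i j) • c j := by
  simp only [smul_sum, sum_smul, smul_smul, range_eq_Ico]
  exact (sum_Ico_Ico_comm 0 (k + 1) fun j i ↦ (K k i * L i j) • c j).symm

section polarKernel

variable {R : Type*} [CommRing R]

theorem polarKernel_mul_polarKernel (h : R) {N k i j : ℕ} (hji : j ≤ i) (hik : i ≤ k)
    (hkN : k ≤ N) :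
    polarKernel h N k i * polarKernel h N i j =
      (N - j).choose (N - k) * h ^ (k - j) * ((-1) ^ (i - j) * (k - j).choose (i - j)) := by
  have choose_mul_choose : (N - j).choose (N - i) * (N - i).choose (N - k) =
      (N - j).choose (N - k) * (k - j).choose (i - j) := by
    rw [Nat.choose_mul (by lia), ← Nat.choose_symm (show i - j ≤ k - j by lia)]
    congr 2 <;> lia
  have choose_mul_choose_cast : ((N - j).choose (N - i) * (N - i).choose (N - k) : R) =
      (N - j).choose (N - k) * (k - j).choose (i - j) :=
    mod_cast congrArg Nat.cast choose_mul_choose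
  have sign : (-1 : R) ^ i * (-1) ^ j = (-1) ^ (i - j) := by
    obtain ⟨m, rfl⟩ := Nat.exists_eq_add_of_le hji
    rw [Nat.add_sub_cancel_left, pow_add, mul_right_comm, ← mul_pow]
    simp
  have power : h ^ (k - i) * h ^ (i - j) = h ^ (k - j) := by
    rw [← pow_add, Nat.sub_add_sub_cancel hik hji]
  calc polarKernel h N k i * polarKernel h N i j
      = ((-1) ^ i * (-1) ^ j) * (h ^ (k - i) * h ^ (i - j)) *
          ((N - j).choose (N - i) * (N - i).choose (N - k)) := by
        unfold polarKernel; ring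
    _ = _ := by rw [sign, power, choose_mul_choose_cast]; ring

theorem sum_Ico_polarKernel_mul_polarKernel (h : R) {N k j : ℕ} (hjk : j ≤ k) (hkN : k ≤ N) :
    ∑ i ∈ Ico j (k + 1), polarKernel h N k i * polarKernel h N i j = if j = k then 1 else 0 := by
  calc ∑ i ∈ Ico j (k + 1), polarKernel h N k i * polarKernel h N i j
      = ∑ i ∈ Ico j (k + 1), (N - j).choose (N - k) * h ^ (k - j) *
          ((-1) ^ (i - j) * (k - j).choose (i - j)) := by
        refine sum_congr rfl fun i hi ↦ ?_
        obtain ⟨hji, hik⟩ := mem_Ico.1 hi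
        exact polarKernel_mul_polarKernel h hji (Nat.lt_succ_iff.1 hik) hkN
    _ = (N - j).choose (N - k) * h ^ (k - j) *
          ∑ m ∈ range (k - j + 1), (-1) ^ m * ((k - j).choose m : R) := by
        rw [← mul_sum, sum_Ico_eq_sum_range, Nat.sub_add_comm hjk]
        simp only [Nat.add_sub_cancel_left]
    _ = if j = k then 1 else 0 := by
        rw [sum_range_neg_one_pow_mul_choose]
        obtain rfl | hlt := hjk.eq_or_lt
        · simp
        · simp [hlt.ne, Nat.sub_ne_zero_of_lt hlt]

theorem sum_polarKernel_smul_sum_polarKernel_smul {A : Type*} [AddCommMonoid A] [Module R A]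
    (h : R) {N k : ℕ} (hkN : k ≤ N) (c : ℕ → A) :
    ∑ i ∈ range (k + 1), polarKernel h N k i • ∑ j ∈ range (i + 1), polarKernel h N i j • c j =
      c k := by
  calc ∑ i ∈ range (k + 1), polarKernel h N k i • ∑ j ∈ range (i + 1), polarKernel h N i j • c j
      = ∑ j ∈ range (k + 1),
          (∑ i ∈ Ico j (k + 1), polarKernel h N k i * polarKernel h N i j) • c j :=
        sum_range_smul_sum_range_smul _ _ c k
    _ = ∑ j ∈ range (k + 1), (if j = k then 1 else 0 : R) • c j :=
        sum_congr rfl fun j hj ↦ by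
          rw [sum_Ico_polarKernel_mul_polarKernel h (mem_range_succ_iff.1 hj) hkN]
    _ = c k := by simp

theorem polarKernel_add_one (h : R) {n k i : ℕ} (hin : i ≤ n) (hkn : k ≤ n) :
    polarKernel h (n + 1) k i =
      (-1) ^ i * ((n - i + 1).choose (n - k + 1) : R) * h ^ (k - i) := by
  rw [polarKernel, Nat.sub_add_comm hkn, Nat.sub_add_comm hin]

end polarKernel

theorem polar_chernMather_involution_general {R A : Type*} [CommRing R] [AddCommMonoid A]
    [Module R A] (h : R) (n : ℕ) (c M c' : ℕ → A)
    (hM : ∀ k, k ≤ n →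
      M k = ∑ i ∈ range (k + 1),
        ((-1 : R) ^ i * (Nat.choose (n - i + 1) (n - k + 1) : R) * h ^ (k - i)) • c i)
    (hc' : ∀ k, k ≤ n →
      c' k = ∑ i ∈ range (k + 1),
        ((-1 : R) ^ i * (Nat.choose (n - i + 1) (n - k + 1) : R) * h ^ (k - i)) • M i) :
    ∀ k, k ≤ n → c' k = c k := by
  have kernel_sum (x : ℕ → A) {k : ℕ} (hk : k ≤ n) :
      ∑ i ∈ range (k + 1),
        ((-1 : R) ^ i * (Nat.choose (n - i + 1) (n - k + 1) : R) * h ^ (k - i)) • x i =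
      ∑ i ∈ range (k + 1), polarKernel h (n + 1) k i • x i :=
    sum_congr rfl fun i hi ↦ by
      rw [polarKernel_add_one h ((mem_range_succ_iff.1 hi).trans hk) hk]
  intro k hk
  calc c' k = ∑ i ∈ range (k + 1), polarKernel h (n + 1) k i • M i := by
        rw [hc' k hk, kernel_sum M hk]
    _ = ∑ i ∈ range (k + 1), polarKernel h (n + 1) k i •
          ∑ j ∈ range (i + 1), polarKernel h (n + 1) i j • c j :=
        sum_congr rfl fun i hi ↦ by
          have hin : i ≤ n := (mem_range_succ_iff.1 hi).trans hk
          rw [hM i hin, kernel_sum c hin]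
    _ = c k := sum_polarKernel_smul_sum_polarKernel_smul h (hk.trans n.le_succ) c

/-- The transformation on finite sequences in a commutative ring `R` with kernel
`(-1)^i C(n-i+1, n-k+1) h^{k-i}` is an involution: applying it twice to
`(c_k)_{k=0}^{n}` returns the original sequence. -/
theorem polar_chernMather_involution {R : Type*} [CommRing R] (h : R) (n : ℕ)
    (c M c' : ℕ → R)
    (hM : ∀ k, k ≤ n →
      M k = ∑ i ∈ Finset.range (k + 1),
        (-1 : R) ^ i * (Nat.choose (n - i + 1) (n - k + 1) : R) * h ^ (k - i) * c i)
    (hc' : ∀ k, k ≤ n →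
      c' k = ∑ i ∈ Finset.range (k + 1),
        (-1 : R) ^ i * (Nat.choose (n - i + 1) (n - k + 1) : R) * h ^ (k - i) * M i) :
    ∀ k, k ≤ n → c' k = c k :=
  polar_chernMather_involution_general h n c M c' hM hc'
end
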